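/- Let n be a natural number, let s be the outmap of a unique sink orientation (USO) of the n-dimensional hypercube, and suppose there exist natural numbers k and l with l ≥ 1 such that s^[k+l](∅) = s^[k](∅). Then s^[l](∅) = ∅. -/

import Mathlib

/-- An outmap `s` is the outmap of an orientation of the `n`-cube if for every
vertex `v` and every direction `lam`, the `lam`-edge at `v` is outgoing at `v`
iff it is incoming at the neighbor `v Δ {lam}`. -/
def IsOrientation (n : ℕ) (s : Finset (Fin n) → Finset (Fin n)) : Prop :=
  ∀ (v : Finset (Fin n)) (lam : Fin n), lam ∈ s v ↔ lam ∉ s (symmDiff v {lam})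

/-- An outmap `s` is a unique sink orientation (USO) of the `n`-cube if it is
the outmap of an orientation and every subcube `[u : w]` has a unique sink. -/
def IsUSO (n : ℕ) (s : Finset (Fin n) → Finset (Fin n)) : Prop :=
  IsOrientation n s ∧
    ∀ u w : Finset (Fin n), u ⊆ w →
      ∃! x : Finset (Fin n), u ⊆ x ∧ x ⊆ w ∧ s x ∩ (w \ u) = ∅

/-!
By induction on `d`, every `d ⊆ w \ u` is the outmap, within the face `[u, w]`, of exactly one
vertex. Splitting the face along a direction `a ∉ d` gives two vertices, one in each facet, with
outmap `d` in all directions other than `a`. Exactly one of the two has its `a`-edge incoming, since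
`d` is attained once in `[u, w]`, so the other one is the only vertex with outmap `insert a d`.
For `[u, w] = [x ∩ y, x ∪ y]` this says that the outmaps of `x ≠ y` differ somewhere on `x ∆ y`;
in particular `s` is injective, and an orbit of an injective map that repeats is a cycle.
-/

open scoped symmDiff

theorem existsUnique_pair_and_not {β : Type*} {x₀ x₁ : β} {p : β → Prop} (hne : x₀ ≠ x₁)
    (h : ∃! x, (x = x₀ ∨ x = x₁) ∧ p x) : ∃! x, (x = x₀ ∨ x = x₁) ∧ ¬p x := by
  obtain ⟨y, ⟨rfl | rfl, hy⟩, hunique⟩ := h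
  · exact ⟨x₁, by grind, by grind⟩
  · exact ⟨x₀, by grind, by grind⟩

section

variable {α : Type*} [DecidableEq α] {s : Finset α → Finset α} {u w d x y : Finset α} {a : α}

/-- The vertex `x` lies in the face `[u, w]`, and `d` is the set of directions of that face in which
the edge at `x` is outgoing under `s`. The sinks of the face are the vertices with `d = ∅`. -/
def HasFaceOutmap (s : Finset α → Finset α) (u w d x : Finset α) : Prop :=
  u ⊆ x ∧ x ⊆ w ∧ s x ∩ (w \ u) = d

/-- The unique sink property, for an outmap on the cube of finite subsets of an arbitrary type:
every finite-dimensional face `[u, w]` has exactly one sink. -/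
def HasUniqueSinks (s : Finset α → Finset α) : Prop :=
  ∀ u w : Finset α, u ⊆ w → ∃! x, HasFaceOutmap s u w ∅ x

theorem hasFaceOutmap_lower_or_upper_iff :
    HasFaceOutmap s u (w.erase a) d x ∨ HasFaceOutmap s (insert a u) w d x ↔
      u ⊆ x ∧ x ⊆ w ∧ (s x ∩ (w \ u)).erase a = d := by
  simp only [HasFaceOutmap, Finset.erase_sdiff_comm, Finset.sdiff_insert, Finset.inter_erase,
    Finset.subset_erase, Finset.insert_subset_iff]
  tauto

theorem hasFaceOutmap_iff_facets (hw : a ∈ w) (hu : a ∉ u) (hd : a ∉ d) :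
    HasFaceOutmap s u w d x ↔
      (HasFaceOutmap s u (w.erase a) d x ∨ HasFaceOutmap s (insert a u) w d x) ∧ a ∉ s x := by
  rw [hasFaceOutmap_lower_or_upper_iff, HasFaceOutmap]
  grind

theorem hasFaceOutmap_insert_iff_facets (hw : a ∈ w) (hu : a ∉ u) (hd : a ∉ d) :
    HasFaceOutmap s u w (insert a d) x ↔
      (HasFaceOutmap s u (w.erase a) d x ∨ HasFaceOutmap s (insert a u) w d x) ∧ a ∈ s x := by
  have mem_iff : a ∈ s x ↔ a ∈ s x ∩ (w \ u) := by grind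
  rw [hasFaceOutmap_lower_or_upper_iff, HasFaceOutmap, mem_iff]
  grind

theorem existsUnique_hasFaceOutmap_insert (hw : a ∈ w) (hu : a ∉ u) (hd : a ∉ d)
    (hface : ∃! x, HasFaceOutmap s u w d x)
    (hlower : ∃! x, HasFaceOutmap s u (w.erase a) d x)
    (hupper : ∃! x, HasFaceOutmap s (insert a u) w d x) :
    ∃! x, HasFaceOutmap s u w (insert a d) x := by
  obtain ⟨x₀, hx₀, hx₀_unique⟩ := hlower
  obtain ⟨x₁, hx₁, hx₁_unique⟩ := hupper
  have lower_iff (x) : HasFaceOutmap s u (w.erase a) d x ↔ x = x₀ :=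
    ⟨hx₀_unique x, fun h ↦ h ▸ hx₀⟩
  have upper_iff (x) : HasFaceOutmap s (insert a u) w d x ↔ x = x₁ :=
    ⟨hx₁_unique x, fun h ↦ h ▸ hx₁⟩
  have hne : x₀ ≠ x₁ := by
    rintro rfl
    exact Finset.notMem_erase a w (hx₀.2.1 (hx₁.1 (Finset.mem_insert_self a u)))
  simp only [hasFaceOutmap_iff_facets hw hu hd, lower_iff, upper_iff] at hface
  simpa only [hasFaceOutmap_insert_iff_facets hw hu hd, lower_iff, upper_iff, not_not] using
    existsUnique_pair_and_not hne hface

namespace HasUniqueSinks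

theorem existsUnique_hasFaceOutmap (hs : HasUniqueSinks s) (huw : u ⊆ w) (hd : d ⊆ w \ u) :
    ∃! x, HasFaceOutmap s u w d x := by
  induction d using Finset.induction_on generalizing u w with
  | empty => exact hs u w huw
  | insert a d had ih =>
    obtain ⟨⟨haw, hau⟩, hd⟩ : (a ∈ w ∧ a ∉ u) ∧ d ⊆ w \ u := by
      simpa only [Finset.insert_subset_iff, Finset.mem_sdiff] using hd
    exact existsUnique_hasFaceOutmap_insert haw hau had (ih huw hd)
      (ih (by grind) (by grind)) (ih (by grind) (by grind))

theorem eq_of_inter_symmDiff_eq (hs : HasUniqueSinks s) (h : s x ∩ (x ∆ y) = s y ∩ (x ∆ y)) :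
    x = y := by
  rw [symmDiff_eq_sup_sdiff_inf] at h
  exact (hs.existsUnique_hasFaceOutmap Finset.inter_subset_union Finset.inter_subset_right).unique
    ⟨Finset.inter_subset_left, Finset.subset_union_left, rfl⟩
    ⟨Finset.inter_subset_right, Finset.subset_union_right, h.symm⟩

theorem injective (hs : HasUniqueSinks s) : Function.Injective s :=
  fun x y h ↦ hs.eq_of_inter_symmDiff_eq (congrArg (· ∩ (x ∆ y)) h)

end HasUniqueSinks

theorem uso_iterate_repeat_of_empty_general (hs : HasUniqueSinks s) (v : Finset α) (k l : ℕ)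
    (h : s^[k + l] v = s^[k] v) : s^[l] v = v := by
  rw [Function.iterate_add_apply] at h
  exact hs.injective.iterate k h

end

/-- If the iterate sequence of a USO outmap starting at ∅ repeats after l more
steps, then already s^[l](∅) = ∅. -/
theorem uso_iterate_repeat_of_empty (n : ℕ)
    (s : Finset (Fin n) → Finset (Fin n)) (hs : IsUSO n s)
    (k l : ℕ) (hl : 1 ≤ l) (h : s^[k + l] ∅ = s^[k] ∅) :
    s^[l] ∅ = ∅ :=
  uso_iterate_repeat_of_empty_general hs.2 ∅ k l h
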